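/- arXiv:1407.0381 — 3 statements merged into one kernel-verified Lean document; each statement's English description precedes it below -/
import Mathlib

section
/- There exist universal constants C1, C2 > 0 such that for all integers k ≥ 2 and n ≥ 2: C1·((min(k/n,1))² + (log k)²/n) ≤ R_plugin(k,n) ≤ C2·((k/n)² + (log(min(k,n)))²/n). -/
open scoped BigOperators
open Real

noncomputable section

/-- The set of probability vectors on `Fin k`. -/
def probVec (k : ℕ) : Set (Fin k → ℝ) := {P | (∀ i, 0 ≤ P i) ∧ (∑ i, P i) = 1}

/-- Shannon entropy `H(P) = ∑ pᵢ log (1/pᵢ)` (natural log, `0·log(1/0) = 0`). -/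
def entropy {k : ℕ} (P : Fin k → ℝ) : ℝ := ∑ i, P i * Real.log (1 / P i)

/-- The multinomial probability mass function of the histogram `N` of `n` i.i.d. samples
from `P`. -/
def multinomialPMF {k : ℕ} (n : ℕ) (P : Fin k → ℝ) (N : Fin k → ℕ) : ℝ :=
  if (∑ i, N i) = n then
    (n.factorial : ℝ) / (∏ i, ((N i).factorial : ℝ)) * ∏ i, P i ^ (N i)
  else 0

/-- Mean squared error of the estimator `est` of the entropy, from the histogram of
`n` i.i.d. samples of `P`. -/
def mseIID {k : ℕ} (n : ℕ) (P : Fin k → ℝ) (est : (Fin k → ℕ) → ℝ) : ℝ :=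
  ∑' N : Fin k → ℕ, multinomialPMF n P N * (est N - entropy P) ^ 2


/-- The plug-in (empirical entropy) estimator from a histogram of `n` samples. -/
def plugIn {k : ℕ} (n : ℕ) (N : Fin k → ℕ) : ℝ :=
  ∑ i, ((N i : ℝ) / n) * Real.log ((n : ℝ) / (N i))

/-- Worst-case quadratic risk of the plug-in estimator. -/
def Rplug (k n : ℕ) : ℝ := ⨆ P : probVec k, mseIID n P.1 (plugIn n)


/-! ### Expectation over the histogram, defined recursively -/

/-- Expectation of `f(N)` where `N` is the histogram of `n` samples from `P`. -/
def Ex {k : ℕ} (P : Fin k → ℝ) : ℕ → ((Fin k → ℕ) → ℝ) → ℝ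
  | 0, f => f 0
  | n + 1, f => ∑ j, P j * Ex P n (fun N => f (N + Pi.single j 1))

theorem Ex_zero {k : ℕ} (P : Fin k → ℝ) (f : (Fin k → ℕ) → ℝ) : Ex P 0 f = f 0 := rfl

theorem Ex_succ {k : ℕ} (P : Fin k → ℝ) (n : ℕ) (f : (Fin k → ℕ) → ℝ) :
    Ex P (n + 1) f = ∑ j, P j * Ex P n (fun N => f (N + Pi.single j 1)) := rfl

theorem Ex_add {k : ℕ} (P : Fin k → ℝ) (n : ℕ) : ∀ f g : (Fin k → ℕ) → ℝ,
    Ex P n (fun N => f N + g N) = Ex P n f + Ex P n g := by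
  induction n with
  | zero => intro f g; rfl
  | succ n ih =>
    intro f g
    simp only [Ex_succ, ih, mul_add, Finset.sum_add_distrib]

theorem Ex_mul {k : ℕ} (P : Fin k → ℝ) (n : ℕ) (c : ℝ) : ∀ f : (Fin k → ℕ) → ℝ,
    Ex P n (fun N => c * f N) = c * Ex P n f := by
  induction n with
  | zero => intro f; rfl
  | succ n ih =>
    intro f
    simp only [Ex_succ, ih, Finset.mul_sum]
    exact Finset.sum_congr rfl fun j _ => by ring

theorem Ex_const {k : ℕ} (P : Fin k → ℝ) (hP : ∑ i, P i = 1) (n : ℕ) (c : ℝ) :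
    Ex P n (fun _ => c) = c := by
  induction n with
  | zero => rfl
  | succ n ih => simp only [Ex_succ, ih, ← Finset.sum_mul, hP, one_mul]

theorem Ex_sum {k : ℕ} {ι : Type*} (P : Fin k → ℝ) (n : ℕ) (s : Finset ι)
    (f : ι → (Fin k → ℕ) → ℝ) :
    Ex P n (fun N => ∑ i ∈ s, f i N) = ∑ i ∈ s, Ex P n (f i) := by
  classical
  induction s using Finset.induction_on with
  | empty =>
    simp only [Finset.sum_empty]
    have := Ex_mul P n 0 (fun _ => 0)
    simpa using this
  | insert a s ha ih =>
    simp only [Finset.sum_insert ha]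
    rw [Ex_add, ih]

theorem Ex_mono {k : ℕ} (P : Fin k → ℝ) (hP : ∀ i, 0 ≤ P i) (n : ℕ) :
    ∀ f g : (Fin k → ℕ) → ℝ,
    (∀ N, ∑ i, N i = n → (∀ i, P i = 0 → N i = 0) → f N ≤ g N) → Ex P n f ≤ Ex P n g := by
  induction n with
  | zero => intro f g h; exact h 0 (by simp) (by simp)
  | succ n ih =>
    intro f g h
    rw [Ex_succ, Ex_succ]
    refine Finset.sum_le_sum fun j _ => ?_
    rcases eq_or_lt_of_le (hP j) with h0 | h0
    · rw [← h0]; simp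
    · refine mul_le_mul_of_nonneg_left (ih _ _ fun N hN hN0 => h _ ?_ ?_) h0.le
      · simp [Finset.sum_add_distrib, hN]
      · intro i hi
        have hij : i ≠ j := by rintro rfl; exact h0.ne' hi
        simp [hN0 i hi, hij]

theorem Ex_congr {k : ℕ} (P : Fin k → ℝ) (hP : ∀ i, 0 ≤ P i) (n : ℕ)
    (f g : (Fin k → ℕ) → ℝ)
    (h : ∀ N, ∑ i, N i = n → (∀ i, P i = 0 → N i = 0) → f N = g N) : Ex P n f = Ex P n g :=
  le_antisymm (Ex_mono P hP n f g fun N a b => (h N a b).le)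
    (Ex_mono P hP n g f fun N a b => (h N a b).ge)

/-! ### Bridge with the multinomial pmf -/

theorem pmf_step {k : ℕ} (P : Fin k → ℝ) (n : ℕ) (M : Fin k → ℕ) (j : Fin k) :
    ((M j : ℝ) + 1) * multinomialPMF (n + 1) P (M + Pi.single j 1)
      = (n + 1) * (P j * multinomialPMF n P M) := by
  unfold multinomialPMF
  have hs : ∑ i, (M + Pi.single j 1 : Fin k → ℕ) i = ∑ i, M i + 1 := by
    simp [Finset.sum_add_distrib]
  rw [hs]
  by_cases h : ∑ i, M i = n
  · rw [if_pos (by omega), if_pos h]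
    have h1 : ∏ i, (((M + Pi.single j 1 : Fin k → ℕ) i).factorial : ℝ)
        = (M j + 1) * ∏ i, ((M i).factorial : ℝ) := by
      rw [← Finset.mul_prod_erase _ _ (Finset.mem_univ j),
        ← Finset.mul_prod_erase (Finset.univ) (fun i => ((M i).factorial : ℝ))
          (Finset.mem_univ j), ← mul_assoc]
      congr 1
      · simp [Nat.factorial_succ]
      · refine Finset.prod_congr rfl fun i hi => ?_
        have : i ≠ j := (Finset.mem_erase.mp hi).1
        simp [this]
    have h2 : ∏ i, P i ^ ((M + Pi.single j 1 : Fin k → ℕ) i) = P j * ∏ i, P i ^ (M i) := by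
      rw [← Finset.mul_prod_erase _ _ (Finset.mem_univ j),
        ← Finset.mul_prod_erase (Finset.univ) (fun i => P i ^ (M i))
          (Finset.mem_univ j), ← mul_assoc]
      congr 1
      · simp [pow_succ, mul_comm]
      · refine Finset.prod_congr rfl fun i hi => ?_
        have : i ≠ j := (Finset.mem_erase.mp hi).1
        simp [this]
    rw [h1, h2, Nat.factorial_succ]
    have h3 : (∏ i, ((M i).factorial : ℝ)) ≠ 0 :=
      Finset.prod_ne_zero_iff.mpr fun i _ => by positivity
    have h4 : ((M j : ℝ) + 1) ≠ 0 := by positivity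
    push_cast
    field_simp
  · rw [if_neg (by omega), if_neg h]; simp

theorem finite_hist (k n : ℕ) : {N : Fin k → ℕ | ∑ i, N i = n}.Finite := by
  refine Set.Finite.subset (Set.Finite.pi' (t := fun _ => Set.Iic n)
    fun _ => Set.finite_Iic n) ?_
  intro N hN i
  have : N i ≤ ∑ i, N i := Finset.single_le_sum (fun _ _ => Nat.zero_le _) (Finset.mem_univ i)
  exact this.trans (le_of_eq hN)

theorem summable_pmf {k : ℕ} (P : Fin k → ℝ) (n : ℕ) (f : (Fin k → ℕ) → ℝ) :
    Summable (fun N => multinomialPMF n P N * f N) := by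
  refine summable_of_hasFiniteSupport ((finite_hist k n).subset ?_)
  intro N hN
  by_contra h
  apply hN
  have : ¬ (∑ i, N i = n) := h
  simp [multinomialPMF, this]

theorem tsum_eq_Ex {k : ℕ} (P : Fin k → ℝ) (n : ℕ) : ∀ f : (Fin k → ℕ) → ℝ,
    ∑' N : Fin k → ℕ, multinomialPMF n P N * f N = Ex P n f := by
  induction n with
  | zero =>
    intro f
    rw [tsum_eq_single 0]
    · simp [multinomialPMF, Ex_zero]
    · intro N hN
      have : ¬ (∑ i, N i = 0) := by
        intro h
        apply hN
        funext i
        exact (Finset.sum_eq_zero_iff.mp h) i (Finset.mem_univ i)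
      simp only [multinomialPMF, if_neg this, zero_mul]
  | succ n ih =>
    intro f
    rw [Ex_succ]
    have key : ∀ j, P j * Ex P n (fun N => f (N + Pi.single j 1))
        = ∑' N : Fin k → ℕ, multinomialPMF (n + 1) P N * ((N j : ℝ) / (n + 1) * f N) := by
      intro j
      rw [← ih, ← tsum_mul_left]
      have hinj : Function.Injective (fun M : Fin k → ℕ => M + Pi.single j 1) :=
        fun a b h => add_right_cancel h
      refine Eq.trans ?_ (hinj.tsum_eq (f := fun N : Fin k → ℕ =>
        multinomialPMF (n + 1) P N * ((N j : ℝ) / (n + 1) * f N)) ?_)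
      · refine tsum_congr fun M => ?_
        have := pmf_step P n M j
        have hn : ((n : ℝ) + 1) ≠ 0 := by positivity
        have e : (((M + Pi.single j 1 : Fin k → ℕ) j : ℕ) : ℝ) = M j + 1 := by simp
        simp only [e]
        field_simp
        linear_combination (-f (M + Pi.single j 1)) * this
      · intro N hN
        have hNj : N j ≠ 0 := by
          intro h; apply hN; simp [h]
        refine ⟨N - Pi.single j 1, ?_⟩
        funext i
        by_cases hij : i = j
        · subst hij; simp; omega
        · simp [hij]
    simp only [key]
    rw [← Summable.tsum_finsetSum (fun j _ => summable_pmf P (n + 1) _)]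
    refine tsum_congr fun N => ?_
    by_cases h : ∑ i, N i = n + 1
    · have h' : ∑ i, (N i : ℝ) = n + 1 := by exact_mod_cast h
      have hn : ((n : ℝ) + 1) ≠ 0 := by positivity
      rw [← Finset.mul_sum, ← Finset.sum_mul, ← Finset.sum_div, h', div_self hn, one_mul]
    · simp [multinomialPMF, h]

theorem mse_eq {k : ℕ} (P : Fin k → ℝ) (n : ℕ) (est : (Fin k → ℕ) → ℝ) :
    mseIID n P est = Ex P n (fun N => (est N - entropy P) ^ 2) := tsum_eq_Ex P n _

/-! ### Moments of linear statistics -/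

/-- Linear statistic. -/
def lin {k : ℕ} (a : Fin k → ℝ) (N : Fin k → ℕ) : ℝ := ∑ i, (N i : ℝ) * a i

theorem lin_step {k : ℕ} (a : Fin k → ℝ) (N : Fin k → ℕ) (j : Fin k) :
    lin a (N + Pi.single j 1) = lin a N + a j := by
  simp [lin, add_mul, Finset.sum_add_distrib, Pi.single_apply]

theorem lin_zero {k : ℕ} (a : Fin k → ℝ) : lin a 0 = 0 := by simp [lin]

section moments
variable {k : ℕ} (P a : Fin k → ℝ)

theorem Ex_lin1 (h1 : ∑ i, P i = 1) (h0 : ∑ i, P i * a i = 0) (n : ℕ) :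
    Ex P n (fun N => lin a N) = 0 := by
  induction n with
  | zero => exact lin_zero a
  | succ n ih =>
    simp only [Ex_succ, lin_step, Ex_add, ih, Ex_const P h1, zero_add, h0]

theorem Ex_lin2 (h1 : ∑ i, P i = 1) (h0 : ∑ i, P i * a i = 0) (n : ℕ) :
    Ex P n (fun N => lin a N ^ 2) = n * ∑ i, P i * a i ^ 2 := by
  induction n with
  | zero => simp [Ex_zero, lin_zero]
  | succ n ih =>
    have e : ∀ j, Ex P n (fun N => (lin a N + a j) ^ 2)
        = n * (∑ i, P i * a i ^ 2) + a j ^ 2 := by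
      intro j
      have : (fun N => (lin a N + a j) ^ 2)
          = fun N => lin a N ^ 2 + ((2 * a j) * lin a N + a j ^ 2) := by funext N; ring
      rw [this, Ex_add, Ex_add, Ex_mul, Ex_const P h1, ih, Ex_lin1 P a h1 h0]; ring
    simp only [Ex_succ, lin_step, e, mul_add, Finset.sum_add_distrib, ← Finset.sum_mul, h1]
    push_cast; ring

theorem Ex_lin3 (h1 : ∑ i, P i = 1) (h0 : ∑ i, P i * a i = 0) (n : ℕ) :
    Ex P n (fun N => lin a N ^ 3) = n * ∑ i, P i * a i ^ 3 := by
  induction n with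
  | zero => simp [Ex_zero, lin_zero]
  | succ n ih =>
    have e : ∀ j, P j * Ex P n (fun N => (lin a N + a j) ^ 3)
        = P j * (n * (∑ i, P i * a i ^ 3)) + (P j * a j) * (3 * (n * ∑ i, P i * a i ^ 2))
          + P j * a j ^ 3 := by
      intro j
      have : (fun N => (lin a N + a j) ^ 3)
          = fun N => lin a N ^ 3 + ((3 * a j) * lin a N ^ 2 +
              ((3 * a j ^ 2) * lin a N + a j ^ 3)) := by funext N; ring
      rw [this, Ex_add, Ex_add, Ex_add, Ex_mul, Ex_mul, Ex_const P h1, ih, Ex_lin1 P a h1 h0,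
        Ex_lin2 P a h1 h0]; ring
    simp only [Ex_succ, lin_step, e, Finset.sum_add_distrib, ← Finset.sum_mul, h1, h0]
    push_cast; ring

theorem Ex_lin4 (h1 : ∑ i, P i = 1) (h0 : ∑ i, P i * a i = 0) (n : ℕ) :
    Ex P n (fun N => lin a N ^ 4)
      = 3 * (n * (n - 1)) * (∑ i, P i * a i ^ 2) ^ 2 + n * ∑ i, P i * a i ^ 4 := by
  induction n with
  | zero => simp [Ex_zero, lin_zero]
  | succ n ih =>
    have e : ∀ j, P j * Ex P n (fun N => (lin a N + a j) ^ 4)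
        = P j * (3 * (n * (n - 1)) * (∑ i, P i * a i ^ 2) ^ 2 + n * ∑ i, P i * a i ^ 4)
          + (P j * a j) * (4 * (n * ∑ i, P i * a i ^ 3))
          + (P j * a j ^ 2) * (6 * (n * ∑ i, P i * a i ^ 2))
          + P j * a j ^ 4 := by
      intro j
      have : (fun N => (lin a N + a j) ^ 4)
          = fun N => lin a N ^ 4 + ((4 * a j) * lin a N ^ 3 + ((6 * a j ^ 2) * lin a N ^ 2 +
              ((4 * a j ^ 3) * lin a N + a j ^ 4))) := by funext N; ring
      rw [this, Ex_add, Ex_add, Ex_add, Ex_add, Ex_mul, Ex_mul, Ex_mul, Ex_const P h1, ih,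
        Ex_lin1 P a h1 h0, Ex_lin2 P a h1 h0, Ex_lin3 P a h1 h0]; ring
    simp only [Ex_succ, lin_step, e, Finset.sum_add_distrib, ← Finset.sum_mul, h1, h0]
    push_cast; ring

end moments

/-! ### Central moments of a single count -/

theorem sum_ind {k : ℕ} (P : Fin k → ℝ) (h1 : ∑ i, P i = 1) (i : Fin k) (g : ℝ → ℝ) :
    ∑ j, P j * g ((if j = i then 1 else 0) - P i)
      = P i * g (1 - P i) + (1 - P i) * g (- P i) := by
  have : ∀ j, P j * g ((if j = i then 1 else 0) - P i)
      = P j * g (- P i) + if j = i then P j * (g (1 - P i) - g (- P i)) else 0 := by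
    intro j; by_cases hj : j = i
    · simp only [if_pos hj]; ring
    · simp [hj]
  simp only [this, Finset.sum_add_distrib, ← Finset.sum_mul, h1]
  simp; ring

theorem lin_ind {k : ℕ} (P : Fin k → ℝ) (i : Fin k) (n : ℕ) (N : Fin k → ℕ)
    (hN : ∑ i, N i = n) :
    lin (fun j => (if j = i then 1 else 0) - P i) N = N i - n * P i := by
  have : ∑ i, (N i : ℝ) = n := by exact_mod_cast hN
  simp [lin, mul_sub, Finset.sum_sub_distrib, ← Finset.sum_mul, this]

section count
variable {k : ℕ} (P : Fin k → ℝ) (hP : ∀ i, 0 ≤ P i) (h1 : ∑ i, P i = 1) (i : Fin k) (n : ℕ)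
include hP h1

theorem P_le_one : P i ≤ 1 := by
  rw [← h1]; exact Finset.single_le_sum (fun j _ => hP j) (Finset.mem_univ i)

theorem cnt2 : Ex P n (fun N => ((N i : ℝ) - n * P i) ^ 2) = n * (P i * (1 - P i)) := by
  have h0 := sum_ind P h1 i (fun x => x)
  rw [Ex_congr P hP n _ (fun N => lin (fun j => (if j = i then 1 else 0) - P i) N ^ 2)
    (fun N hN _ => by rw [lin_ind P i n N hN]),
    Ex_lin2 P _ h1 (by rw [h0]; ring), sum_ind P h1 i (fun x => x ^ 2)]
  ring

theorem cnt3 : Ex P n (fun N => ((N i : ℝ) - n * P i) ^ 3)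
    = n * (P i * (1 - P i) * (1 - 2 * P i)) := by
  have h0 := sum_ind P h1 i (fun x => x)
  rw [Ex_congr P hP n _ (fun N => lin (fun j => (if j = i then 1 else 0) - P i) N ^ 3)
    (fun N hN _ => by rw [lin_ind P i n N hN]),
    Ex_lin3 P _ h1 (by rw [h0]; ring), sum_ind P h1 i (fun x => x ^ 3)]
  ring

theorem cnt4 : Ex P n (fun N => ((N i : ℝ) - n * P i) ^ 4)
    ≤ 3 * (n * P i) ^ 2 + n * P i := by
  have h0 := sum_ind P h1 i (fun x => x)
  rw [Ex_congr P hP n _ (fun N => lin (fun j => (if j = i then 1 else 0) - P i) N ^ 4)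
    (fun N hN _ => by rw [lin_ind P i n N hN]),
    Ex_lin4 P _ h1 (by rw [h0]; ring), sum_ind P h1 i (fun x => x ^ 2),
    sum_ind P h1 i (fun x => x ^ 4)]
  have p0 := hP i
  have p1 := P_le_one P hP h1 i
  set p := P i
  have hn : (0 : ℝ) ≤ n := Nat.cast_nonneg n
  have q0 : 0 ≤ 1 - p := by linarith
  have e1 : p * (1 - p) ^ 2 + (1 - p) * (-p) ^ 2 = p * (1 - p) := by ring
  rw [e1]
  have hv : (p * (1 - p)) ^ 2 ≤ p ^ 2 := by
    apply pow_le_pow_left₀ (by positivity); nlinarith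
  have hm : p * (1 - p) ^ 4 + (1 - p) * (-p) ^ 4 ≤ p := by
    have a1 : (1 - p) ^ 4 ≤ 1 - p := by
      have := pow_le_pow_of_le_one q0 (by linarith : 1 - p ≤ 1) (by norm_num : 1 ≤ 4)
      simpa using this
    have a2 : p ^ 4 ≤ p := by
      have := pow_le_pow_of_le_one p0 p1 (by norm_num : 1 ≤ 4)
      simpa using this
    have a3 : (-p) ^ 4 = p ^ 4 := by ring
    rw [a3]
    nlinarith
  have b1 : 3 * ((n : ℝ) * (n - 1)) * (p * (1 - p)) ^ 2 ≤ 3 * (n * n) * p ^ 2 := by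
    have : 0 ≤ (p * (1 - p)) ^ 2 := by positivity
    have c1 : (n : ℝ) * (n - 1) ≤ n * n := by nlinarith
    calc _ ≤ 3 * ((n : ℝ) * n) * (p * (1 - p)) ^ 2 := by gcongr
      _ ≤ _ := by gcongr
  have b2 := mul_le_mul_of_nonneg_left hm hn
  nlinarith

end count

/-! ### Pointwise estimates -/

/-- `N log (N/λ) - N + λ`. -/
def hh (x l : ℝ) : ℝ := x * Real.log (x / l) - x + l

theorem hh_nonneg {x l : ℝ} (hx : 0 ≤ x) (hl : 0 < l) : 0 ≤ hh x l := by
  unfold hh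
  rcases eq_or_lt_of_le hx with h | h
  · rw [← h]; simp; exact hl.le
  · have := Real.log_le_sub_one_of_pos (div_pos hl h)
    have e : Real.log (l / x) = - Real.log (x / l) := by
      rw [← Real.log_inv, inv_div]
    rw [e] at this
    have h2 := mul_le_mul_of_nonneg_left this h.le
    have e2 : x * (l / x - 1) = l - x := by field_simp
    rw [e2] at h2
    linarith

theorem hh_le {x l : ℝ} (hx : 0 ≤ x) (hl : 0 < l) : hh x l ≤ (x - l) ^ 2 / l := by
  unfold hh
  rcases eq_or_lt_of_le hx with h | h
  · rw [← h]; simp; rw [sq, mul_div_assoc, div_self hl.ne', mul_one]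
  · have := Real.log_le_sub_one_of_pos (div_pos h hl)
    have h2 := mul_le_mul_of_nonneg_left this h.le
    have e2 : (x - l) ^ 2 / l = x * (x / l - 1) - x + l := by field_simp; ring
    rw [e2]; linarith

theorem log_sq_le {x : ℝ} (hx : 1 ≤ x) : Real.log x ^ 2 ≤ 4 * x := by
  have h0 : 0 ≤ Real.log x := Real.log_nonneg hx
  have hs : 0 < Real.sqrt x := Real.sqrt_pos.mpr (by linarith)
  have h1 : Real.log x = 2 * Real.log (Real.sqrt x) := by
    rw [Real.log_sqrt (by linarith)]; ring
  have h2 := Real.log_le_sub_one_of_pos hs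
  have h3 : Real.log x ≤ 2 * Real.sqrt x := by linarith
  calc _ ≤ (2 * Real.sqrt x) ^ 2 := by gcongr
    _ = 4 * x := by rw [mul_pow, Real.sq_sqrt (by linarith)]; norm_num

theorem mul_log_sq_le {x : ℝ} (hx : 0 < x) (hx1 : x ≤ 1) : x * Real.log x ^ 2 ≤ 4 := by
  have := log_sq_le (x := x⁻¹) ((one_le_inv₀ hx).mpr hx1)
  rw [Real.log_inv, neg_sq] at this
  calc _ ≤ x * (4 * x⁻¹) := by gcongr
    _ = 4 := by field_simp

theorem hh_small (N : ℕ) {l : ℝ} (hl : 0 < l) (hl1 : l ≤ 1) :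
    hh N l ^ 2 ≤ 2 * (N : ℝ) ^ 4 + 2 * Real.log l ^ 2 * (N : ℝ) ^ 2 + l ^ 2 := by
  rcases Nat.eq_zero_or_pos N with h | h
  · subst h; simp [hh]
  · have hN : (1 : ℝ) ≤ N := by exact_mod_cast h
    have h0 := hh_nonneg (x := N) (by linarith) hl
    have hlog : Real.log l ≤ 0 := Real.log_nonpos hl.le hl1
    have h2 : hh N l ≤ (N : ℝ) ^ 2 + N * (-Real.log l) := by
      unfold hh
      rw [Real.log_div (by linarith) hl.ne']
      have := Real.log_le_sub_one_of_pos (by linarith : (0 : ℝ) < N)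
      nlinarith
    have h3 : hh N l ^ 2 ≤ ((N : ℝ) ^ 2 + N * (-Real.log l)) ^ 2 := by gcongr
    nlinarith [sq_nonneg ((N : ℝ) ^ 2 - N * (-Real.log l)), sq_nonneg l]

theorem log_lower {x : ℝ} (hx : 0 < x) :
    (x - 1 + (x - 1) ^ 2 / 2 - (x - 1) ^ 3 / 6) / x ≤ Real.log x := by
  let ψ : ℝ → ℝ := fun x => Real.log x - (x - 1 + (x - 1) ^ 2 / 2 - (x - 1) ^ 3 / 6) / x
  have hd : ∀ y, 0 < y → HasDerivAt ψ ((y - 1) ^ 3 / 3 / y ^ 2) y := by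
    intro y hy
    have e1 := Real.hasDerivAt_log hy.ne'
    have e0 : HasDerivAt (fun y : ℝ => y - 1) 1 y := (hasDerivAt_id y).sub_const 1
    have e2 := ((e0.add ((e0.pow 2).div_const 2)).sub ((e0.pow 3).div_const 6)).div
      (hasDerivAt_id y) hy.ne'
    have e3 := e1.sub e2
    refine e3.congr_deriv ?_
    simp
    field_simp
    ring
  have h1 : ψ 1 = 0 := by simp [ψ]
  suffices 0 ≤ ψ x by
    have h : ψ x = Real.log x - (x - 1 + (x - 1) ^ 2 / 2 - (x - 1) ^ 3 / 6) / x := rfl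
    linarith
  rw [← h1]
  rcases le_total 1 x with h | h
  · have : MonotoneOn ψ (Set.Ici 1) := by
      refine monotoneOn_of_deriv_nonneg (convex_Ici 1) ?_ ?_ ?_
      · intro y hy
        exact (hd y (lt_of_lt_of_le one_pos hy)).continuousAt.continuousWithinAt
      · intro y hy
        rw [interior_Ici] at hy
        exact (hd y (lt_trans one_pos hy)).differentiableAt.differentiableWithinAt
      · intro y hy
        rw [interior_Ici] at hy
        have hy' : 1 < y := hy
        rw [(hd y (lt_trans one_pos hy)).deriv]
        have : 0 ≤ y - 1 := by linarith
        positivity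
    exact this (Set.self_mem_Ici) h h
  · have : AntitoneOn ψ (Set.Ioc 0 1) := by
      refine antitoneOn_of_deriv_nonpos (convex_Ioc 0 1) ?_ ?_ ?_
      · intro y hy
        exact (hd y hy.1).continuousAt.continuousWithinAt
      · intro y hy
        rw [interior_Ioc] at hy
        exact (hd y hy.1).differentiableAt.differentiableWithinAt
      · intro y hy
        rw [interior_Ioc] at hy
        rw [(hd y hy.1).deriv]
        have h3 : 0 ≤ (1 - y) ^ 3 := pow_nonneg (by linarith [hy.2]) 3
        have h4 : (y - 1) ^ 3 ≤ 0 := by nlinarith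
        exact div_nonpos_of_nonpos_of_nonneg (by linarith) (by positivity)
    exact this ⟨hx, h⟩ ⟨one_pos, le_rfl⟩ h

theorem hh_lower {x l : ℝ} (hx : 0 ≤ x) (hl : 0 < l) :
    1 / (2 * l) * (x - l) ^ 2 - 1 / (6 * l ^ 2) * (x - l) ^ 3 ≤ hh x l := by
  unfold hh
  rcases eq_or_lt_of_le hx with h | h
  · rw [← h]
    have e : 1 / (2 * l) * (0 - l) ^ 2 - 1 / (6 * l ^ 2) * (0 - l) ^ 3 = 2 / 3 * l := by
      field_simp; ring
    rw [e]; simp; linarith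
  · have := mul_le_mul_of_nonneg_left (log_lower (div_pos h hl)) h.le
    have e : x * ((x / l - 1 + (x / l - 1) ^ 2 / 2 - (x / l - 1) ^ 3 / 6) / (x / l))
       = 1 / (2 * l) * (x - l) ^ 2 - 1 / (6 * l ^ 2) * (x - l) ^ 3 + x - l := by
      field_simp; ring
    rw [e] at this; linarith

/-! ### Decomposition of the error -/

section decomp
variable {k : ℕ} (P : Fin k → ℝ) (hP : ∀ i, 0 ≤ P i) (h1 : ∑ i, P i = 1) (n : ℕ) (hn : 1 ≤ n)

/-- Centered log-likelihood. -/
def cl {k : ℕ} (P : Fin k → ℝ) (i : Fin k) : ℝ := Real.log (1 / P i) - entropy P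

include h1 in
theorem cl_mean : ∑ i, P i * cl P i = 0 := by
  simp only [cl, mul_sub, Finset.sum_sub_distrib, ← Finset.sum_mul, h1]
  simp [entropy]

include h1 hn

theorem decomp (N : Fin k → ℕ) (hN : ∑ i, N i = n) (hN0 : ∀ i, P i = 0 → N i = 0) :
    plugIn n N - entropy P
      = 1 / n * lin (cl P) N - 1 / n * ∑ i, hh (N i) (n * P i) := by
  have hNr : ∑ i, (N i : ℝ) = n := by exact_mod_cast hN
  have hn0 : (n : ℝ) ≠ 0 := by positivity
  have e1 : ∑ i, hh (N i) (n * P i) = ∑ i, (N i : ℝ) * Real.log (N i / (n * P i)) := by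
    simp only [hh, Finset.sum_add_distrib, Finset.sum_sub_distrib, ← Finset.mul_sum, hNr, h1]
    ring
  have e2 : lin (cl P) N = ∑ i, (N i : ℝ) * Real.log (1 / P i) - n * entropy P := by
    simp only [lin, cl, mul_sub, Finset.sum_sub_distrib, ← Finset.sum_mul, hNr]
  have e3 : plugIn n N = 1 / n * (∑ i, (N i : ℝ) * Real.log (1 / P i)
      - ∑ i, (N i : ℝ) * Real.log (N i / (n * P i))) := by
    unfold plugIn
    rw [← Finset.sum_sub_distrib, Finset.mul_sum]
    refine Finset.sum_congr rfl fun i _ => ?_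
    by_cases h : N i = 0
    · simp [h]
    · have hp : P i ≠ 0 := fun hp => h (hN0 i hp)
      have hNi : (N i : ℝ) ≠ 0 := by exact_mod_cast h
      rw [Real.log_div hn0 hNi, Real.log_div hNi (mul_ne_zero hn0 hp), Real.log_mul hn0 hp,
        Real.log_div one_ne_zero hp, Real.log_one]
      ring
  rw [e3, e2, e1]
  field_simp
  ring

include hP in
theorem Ex_hh_sq (i : Fin k) : Ex P n (fun N => hh (N i) (n * P i) ^ 2) ≤ 120 := by
  have hn0 : (0 : ℝ) < n := by exact_mod_cast hn
  rcases eq_or_lt_of_le (hP i) with h0 | h0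
  · rw [Ex_congr P hP n _ (fun _ => 0), Ex_const P h1]
    · norm_num
    · intro N _ hN0
      rw [← h0, hN0 i h0.symm]; simp [hh]
  have hl : 0 < n * P i := mul_pos hn0 h0
  have c4 := cnt4 P hP h1 i n
  have c2 := cnt2 P hP h1 i n
  set l := (n : ℝ) * P i with hldef
  rcases le_total 1 l with h | h
  · have : Ex P n (fun N => hh (N i) l ^ 2) ≤ Ex P n (fun N => (1 / l ^ 2) * ((N i : ℝ) - l) ^ 4) := by
      refine Ex_mono P hP n _ _ fun N _ _ => ?_
      have a := hh_nonneg (x := N i) (Nat.cast_nonneg _) hl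
      have b := hh_le (x := N i) (Nat.cast_nonneg _) hl
      calc _ ≤ (((N i : ℝ) - l) ^ 2 / l) ^ 2 := by gcongr
        _ = _ := by field_simp
    rw [Ex_mul] at this
    refine this.trans ?_
    rw [one_div_mul_eq_div, div_le_iff₀ (by positivity)]
    nlinarith
  · have m4 : Ex P n (fun N => (N i : ℝ) ^ 4) ≤ 40 * l := by
      have : Ex P n (fun N => (N i : ℝ) ^ 4)
          ≤ Ex P n (fun N => 8 * ((N i : ℝ) - l) ^ 4 + 8 * l ^ 4) := by
        refine Ex_mono P hP n _ _ fun N _ _ => ?_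
        have t1 : (N i : ℝ) ^ 2 ≤ 2 * ((N i : ℝ) - l) ^ 2 + 2 * l ^ 2 := by
          nlinarith [sq_nonneg ((N i : ℝ) - 2 * l)]
        have t2 : ((N i : ℝ) ^ 2) ^ 2 ≤ (2 * ((N i : ℝ) - l) ^ 2 + 2 * l ^ 2) ^ 2 := by gcongr
        nlinarith [sq_nonneg (((N i : ℝ) - l) ^ 2 - l ^ 2)]
      rw [Ex_add, Ex_mul, Ex_const P h1] at this
      have l2 : l ^ 2 ≤ l := by nlinarith
      have l4 : l ^ 4 ≤ l := by
        have := pow_le_pow_of_le_one hl.le h (by norm_num : 1 ≤ 4)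
        simpa using this
      linarith
    have m2 : Ex P n (fun N => (N i : ℝ) ^ 2) ≤ 4 * l := by
      have : Ex P n (fun N => (N i : ℝ) ^ 2)
          ≤ Ex P n (fun N => 2 * ((N i : ℝ) - l) ^ 2 + 2 * l ^ 2) := by
        refine Ex_mono P hP n _ _ fun N _ _ => ?_
        nlinarith [sq_nonneg ((N i : ℝ) - 2 * l)]
      rw [Ex_add, Ex_mul, Ex_const P h1, c2] at this
      have l2 : l ^ 2 ≤ l := by nlinarith
      have : (n : ℝ) * (P i * (1 - P i)) ≤ l := by
        rw [hldef]; nlinarith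
      linarith
    have : Ex P n (fun N => hh (N i) l ^ 2)
        ≤ Ex P n (fun N => 2 * (N i : ℝ) ^ 4 + 2 * Real.log l ^ 2 * (N i : ℝ) ^ 2 + l ^ 2) :=
      Ex_mono P hP n _ _ fun N _ _ => hh_small (N i) hl h
    rw [Ex_add, Ex_add, Ex_mul, Ex_mul, Ex_const P h1] at this
    have q := mul_log_sq_le hl h
    have r := mul_le_mul_of_nonneg_left m2 (by positivity : 0 ≤ 2 * Real.log l ^ 2)
    -- crude constant below
    have l2 : l ^ 2 ≤ l := by nlinarith
    nlinarith

end decomp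

section risk
variable {k : ℕ} (P : Fin k → ℝ) (hP : ∀ i, 0 ≤ P i) (h1 : ∑ i, P i = 1) (n : ℕ) (hn : 1 ≤ n)
include hP h1 hn

theorem Ex_D_sq : Ex P n (fun N => (1 / n * ∑ i, hh (N i) (n * P i)) ^ 2)
    ≤ 120 * ((k : ℝ) / n) ^ 2 := by
  have : Ex P n (fun N => (1 / n * ∑ i, hh (N i) (n * P i)) ^ 2)
      ≤ Ex P n (fun N => ((k : ℝ) / n ^ 2) * ∑ i, hh (N i) (n * P i) ^ 2) := by
    refine Ex_mono P hP n _ _ fun N _ _ => ?_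
    have c := sq_sum_le_card_mul_sum_sq (s := Finset.univ) (f := fun i => hh (N i) (n * P i))
    rw [Finset.card_univ, Fintype.card_fin] at c
    calc _ = 1 / (n : ℝ) ^ 2 * (∑ i, hh (N i) (n * P i)) ^ 2 := by ring
      _ ≤ 1 / (n : ℝ) ^ 2 * (k * ∑ i, hh (N i) (n * P i) ^ 2) := by gcongr
      _ = _ := by ring
  rw [Ex_mul, Ex_sum] at this
  refine this.trans ?_
  have s : ∑ i, Ex P n (fun N => hh (N i) (n * P i) ^ 2) ≤ ∑ i : Fin k, (120 : ℝ) :=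
    Finset.sum_le_sum fun i _ => Ex_hh_sq P hP h1 n hn i
  rw [Finset.sum_const, Finset.card_univ, Fintype.card_fin, nsmul_eq_mul] at s
  calc _ ≤ (k : ℝ) / n ^ 2 * (k * 120) := by gcongr
    _ = _ := by ring

omit hP in
theorem Ex_L_sq : Ex P n (fun N => (1 / n * lin (cl P) N) ^ 2)
    = 1 / n * ∑ i, P i * cl P i ^ 2 := by
  have e : (fun N : Fin k → ℕ => (1 / (n : ℝ) * lin (cl P) N) ^ 2)
      = fun N => (1 / (n : ℝ)) ^ 2 * lin (cl P) N ^ 2 := by funext N; ring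
  have hn0 : (n : ℝ) ≠ 0 := by positivity
  rw [e, Ex_mul, Ex_lin2 P _ h1 (cl_mean P h1)]
  field_simp

theorem mse_upper : mseIID n P (plugIn n)
    ≤ 2 * (1 / n * ∑ i, P i * cl P i ^ 2) + 240 * ((k : ℝ) / n) ^ 2 := by
  rw [mse_eq]
  have : Ex P n (fun N => (plugIn n N - entropy P) ^ 2)
      ≤ Ex P n (fun N => 2 * (1 / n * lin (cl P) N) ^ 2
        + 2 * (1 / n * ∑ i, hh (N i) (n * P i)) ^ 2) := by
    refine Ex_mono P hP n _ _ fun N hN hN0 => ?_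
    rw [decomp P h1 n hn N hN hN0]
    nlinarith [sq_nonneg (1 / n * lin (cl P) N + 1 / n * ∑ i, hh (N i) (n * P i))]
  rw [Ex_add, Ex_mul, Ex_mul, Ex_L_sq P h1 n hn] at this
  have := Ex_D_sq P hP h1 n hn
  linarith

theorem mse_lower : 1 / 2 * (1 / n * ∑ i, P i * cl P i ^ 2) - 120 * ((k : ℝ) / n) ^ 2
    ≤ mseIID n P (plugIn n) := by
  rw [mse_eq]
  have : Ex P n (fun N => 1 / 2 * (1 / n * lin (cl P) N) ^ 2
        + (-1) * (1 / n * ∑ i, hh (N i) (n * P i)) ^ 2)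
      ≤ Ex P n (fun N => (plugIn n N - entropy P) ^ 2) := by
    refine Ex_mono P hP n _ _ fun N hN hN0 => ?_
    rw [decomp P h1 n hn N hN hN0]
    nlinarith [sq_nonneg (1 / n * lin (cl P) N - 2 * (1 / n * ∑ i, hh (N i) (n * P i)))]
  rw [Ex_add, Ex_mul, Ex_mul, Ex_L_sq P h1 n hn] at this
  have := Ex_D_sq P hP h1 n hn
  linarith

omit n hn in
theorem var_le (hk : 2 ≤ k) : ∑ i, P i * cl P i ^ 2 ≤ 10 * Real.log k ^ 2 := by
  have hk0 : (2 : ℝ) ≤ k := by exact_mod_cast hk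
  have hl2 : 0.69 < Real.log k :=
    lt_of_lt_of_le (by linarith [Real.log_two_gt_d9]) (Real.log_le_log (by norm_num) hk0)
  have s1 : ∑ i, P i * cl P i ^ 2 ≤ ∑ i, P i * (Real.log (1 / P i) - Real.log k) ^ 2 := by
    have e : ∑ i, P i * (Real.log (1 / P i) - Real.log k) ^ 2
        = ∑ i, P i * cl P i ^ 2 + 2 * (entropy P - Real.log k) * ∑ i, P i * cl P i
          + (entropy P - Real.log k) ^ 2 * ∑ i, P i := by
      rw [Finset.mul_sum, Finset.mul_sum, ← Finset.sum_add_distrib, ← Finset.sum_add_distrib]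
      refine Finset.sum_congr rfl fun i _ => ?_
      simp only [cl]; ring
    rw [e, cl_mean P h1, h1]
    nlinarith [sq_nonneg (entropy P - Real.log k)]
  have s2 : ∀ i, P i * (Real.log (1 / P i) - Real.log k) ^ 2
      ≤ P i * Real.log k ^ 2 + 4 / k := by
    intro i
    rcases eq_or_lt_of_le (hP i) with h0 | h0
    · rw [← h0]; simp; positivity
    have p1 := P_le_one P hP h1 i
    have e : (Real.log (1 / P i) - Real.log k) ^ 2 = Real.log (k * P i) ^ 2 := by
      rw [Real.log_div one_ne_zero h0.ne', Real.log_mul (by positivity) h0.ne', Real.log_one]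
      ring
    rw [e]
    have hk1 : (0 : ℝ) < k := by linarith
    rcases le_total (k * P i) 1 with h | h
    · have := mul_log_sq_le (mul_pos hk1 h0) h
      have t : P i * Real.log (k * P i) ^ 2 ≤ 4 / k := by
        rw [le_div_iff₀ hk1]; linarith
      have : 0 ≤ P i * Real.log k ^ 2 := by positivity
      linarith
    · have a : 0 ≤ Real.log (k * P i) := Real.log_nonneg h
      have b : Real.log (k * P i) ≤ Real.log k :=
        Real.log_le_log (by linarith) (by nlinarith)
      have : P i * Real.log (k * P i) ^ 2 ≤ P i * Real.log k ^ 2 := by gcongr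
      have : (0 : ℝ) ≤ 4 / k := by positivity
      linarith
  have s3 := Finset.sum_le_sum fun i (_ : i ∈ Finset.univ) => s2 i
  rw [Finset.sum_add_distrib, ← Finset.sum_mul, h1, Finset.sum_const, Finset.card_univ,
    Fintype.card_fin, nsmul_eq_mul, mul_div_cancel₀ _ (by positivity)] at s3
  nlinarith

theorem mse_upper' (hk : 2 ≤ k) : mseIID n P (plugIn n)
    ≤ 400 * (((k : ℝ) / n) ^ 2 + (Real.log (min (k : ℝ) n)) ^ 2 / n) := by
  have hn0 : (0 : ℝ) < n := by exact_mod_cast hn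
  have hk0 : (2 : ℝ) ≤ k := by exact_mod_cast hk
  have a := mse_upper P hP h1 n hn
  have b := var_le P hP h1 hk
  have c : 1 / (n : ℝ) * ∑ i, P i * cl P i ^ 2 ≤ 10 * (Real.log k ^ 2 / n) := by
    calc _ ≤ 1 / (n : ℝ) * (10 * Real.log k ^ 2) := by gcongr
      _ = _ := by ring
  have d : 0 ≤ ((k : ℝ) / n) ^ 2 := by positivity
  rcases le_total (k : ℝ) n with h | h
  · rw [min_eq_left h]
    have : 0 ≤ Real.log k ^ 2 / n := by positivity
    linarith
  · rw [min_eq_right h]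
    have : 0 ≤ Real.log n ^ 2 / n := by positivity
    have e : Real.log k ^ 2 / n ≤ 4 * (k / n) := by
      rw [← mul_div_assoc]
      gcongr
      exact log_sq_le (by linarith)
    have f : (1 : ℝ) ≤ k / n := by rwa [le_div_iff₀ hn0, one_mul]
    nlinarith

end risk

/-! ### Bounds on `Rplug` -/

theorem mse_le_Rplug {k n : ℕ} (hk : 2 ≤ k) (hn : 1 ≤ n) (P : Fin k → ℝ) (hP : ∀ i, 0 ≤ P i)
    (h1 : ∑ i, P i = 1) : mseIID n P (plugIn n) ≤ Rplug k n := by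
  refine le_ciSup (f := fun P : probVec k => mseIID n P.1 (plugIn n)) ?_ ⟨P, hP, h1⟩
  refine ⟨400 * (((k : ℝ) / n) ^ 2 + (Real.log (min (k : ℝ) n)) ^ 2 / n), ?_⟩
  rintro _ ⟨Q, rfl⟩
  exact mse_upper' Q.1 Q.2.1 Q.2.2 n hn hk

theorem unif_sum {k : ℕ} (hk : 2 ≤ k) : ∑ _i : Fin k, (1 / (k : ℝ)) = 1 := by
  have : (k : ℝ) ≠ 0 := by positivity
  simp [this]

theorem unif_entropy {k : ℕ} (hk : 2 ≤ k) :
    entropy (fun _ : Fin k => 1 / (k : ℝ)) = Real.log k := by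
  unfold entropy
  rw [← Finset.sum_mul, unif_sum hk, one_mul, one_div_one_div]

theorem Rplug_upper {k n : ℕ} (hk : 2 ≤ k) (hn : 1 ≤ n) :
    Rplug k n ≤ 400 * (((k : ℝ) / n) ^ 2 + (Real.log (min (k : ℝ) n)) ^ 2 / n) := by
  have : Nonempty (probVec k) :=
    ⟨⟨fun _ => 1 / (k : ℝ), fun _ => by positivity, unif_sum hk⟩⟩
  exact ciSup_le fun Q => mse_upper' Q.1 Q.2.1 Q.2.2 n hn hk

theorem Rplug_bias {k n : ℕ} (hk : 2 ≤ k) (hn : 1 ≤ n) (hkn : k ≤ 2 * n) :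
    ((k : ℝ) / n) ^ 2 / 144 ≤ Rplug k n := by
  have hn0 : (0 : ℝ) < n := by exact_mod_cast hn
  have hk0 : (2 : ℝ) ≤ k := by exact_mod_cast hk
  have hkn' : (k : ℝ) ≤ 2 * n := by exact_mod_cast hkn
  set P : Fin k → ℝ := fun _ => 1 / (k : ℝ) with hPdef
  have hP : ∀ i, 0 ≤ P i := fun i => by positivity
  have h1 : ∑ i, P i = 1 := unif_sum hk
  refine le_trans ?_ (mse_le_Rplug hk hn P hP h1)
  rw [mse_eq]
  have hcl : cl P = fun _ => 0 := by
    funext i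
    simp only [cl]
    rw [unif_entropy hk]
    simp [hPdef]
  have hlin : ∀ N, lin (cl P) N = 0 := fun N => by rw [hcl]; simp [lin]
  -- lower bound on the mean of each term
  have hEh : ∀ i, 1 / 12 ≤ Ex P n (fun N => hh (N i) (n * P i)) := by
    intro i
    have hp : 0 < P i := by simp only [hPdef]; positivity
    have hp2 : P i ≤ 1 / 2 := by
      simp only [hPdef]; exact one_div_le_one_div_of_le (by norm_num) hk0
    have hl : 0 < n * P i := mul_pos hn0 hp
    have hl2 : 1 / 2 ≤ n * P i := by
      simp only [hPdef]; rw [mul_one_div, le_div_iff₀ (by linarith)]; linarith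
    have c2 := cnt2 P hP h1 i n
    have c3 := cnt3 P hP h1 i n
    have : Ex P n (fun N => 1 / (2 * (n * P i)) * ((N i : ℝ) - n * P i) ^ 2
        + (-(1 / (6 * (n * P i) ^ 2))) * ((N i : ℝ) - n * P i) ^ 3)
        ≤ Ex P n (fun N => hh (N i) (n * P i)) := by
      refine Ex_mono P hP n _ _ fun N _ _ => ?_
      have := hh_lower (x := N i) (Nat.cast_nonneg _) hl
      linarith
    refine le_trans ?_ this
    rw [Ex_add, Ex_mul, Ex_mul, c2, c3]
    generalize P i = p at *
    have e : 1 / (2 * ((n : ℝ) * p)) * (n * (p * (1 - p)))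
        + -(1 / (6 * ((n : ℝ) * p) ^ 2)) * (n * (p * (1 - p) * (1 - 2 * p)))
        = (1 - p) * (1 / 2 - (1 - 2 * p) * (1 / (6 * (n * p)))) := by
      field_simp
      ring
    rw [e]
    have f : 1 / (6 * ((n : ℝ) * p)) ≤ 1 / 3 :=
      one_div_le_one_div_of_le (by norm_num) (by linarith)
    have f0 : 0 ≤ 1 / (6 * ((n : ℝ) * p)) := by positivity
    have g : (1 - 2 * p) * (1 / (6 * ((n : ℝ) * p))) ≤ 1 / 3 := by nlinarith
    nlinarith
  set c : ℝ := (k : ℝ) / n / 12 with hc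
  have hc0 : 0 ≤ c := by positivity
  have : Ex P n (fun N => (2 * c * (1 / n)) * (∑ i, hh (N i) (n * P i)) + -c ^ 2)
      ≤ Ex P n (fun N => (plugIn n N - entropy P) ^ 2) := by
    refine Ex_mono P hP n _ _ fun N hN hN0 => ?_
    rw [decomp P h1 n hn N hN hN0, hlin]
    nlinarith [sq_nonneg (1 / n * ∑ i, hh (N i) (n * P i) - c)]
  refine le_trans ?_ this
  rw [Ex_add, Ex_mul, Ex_const P h1, Ex_sum]
  have s := Finset.sum_le_sum fun i (_ : i ∈ Finset.univ) => hEh i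
  rw [Finset.sum_const, Finset.card_univ, Fintype.card_fin, nsmul_eq_mul] at s
  have t := mul_le_mul_of_nonneg_left s (by positivity : 0 ≤ 2 * c * (1 / (n : ℝ)))
  have u : 2 * c * (1 / (n : ℝ)) * (k * (1 / 12)) = 2 * c ^ 2 := by rw [hc]; ring
  have v : ((k : ℝ) / n) ^ 2 / 144 = c ^ 2 := by rw [hc]; ring
  linarith

theorem plugIn_le {k n : ℕ} (hn : 1 ≤ n) (N : Fin k → ℕ) (hN : ∑ i, N i = n) :
    plugIn n N ≤ Real.log n := by
  have hn0 : (0 : ℝ) < n := by exact_mod_cast hn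
  have hNr : ∑ i, (N i : ℝ) = n := by exact_mod_cast hN
  have : plugIn n N ≤ ∑ i, (N i : ℝ) / n * Real.log n := by
    refine Finset.sum_le_sum fun i _ => ?_
    by_cases h : N i = 0
    · simp [h]
    · have h1 : (1 : ℝ) ≤ N i := by exact_mod_cast Nat.one_le_iff_ne_zero.mpr h
      refine mul_le_mul_of_nonneg_left (Real.log_le_log (by positivity) ?_) (by positivity)
      exact div_le_self hn0.le h1
  rwa [← Finset.sum_mul, ← Finset.sum_div, hNr, div_self hn0.ne', one_mul] at this

theorem Rplug_large {k n : ℕ} (hk : 2 ≤ k) (hn : 1 ≤ n) (hkn : n ≤ k) :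
    (Real.log k - Real.log n) ^ 2 ≤ Rplug k n := by
  have hn0 : (0 : ℝ) < n := by exact_mod_cast hn
  have hkn' : (n : ℝ) ≤ k := by exact_mod_cast hkn
  have hP : ∀ i : Fin k, 0 ≤ (fun _ : Fin k => 1 / (k : ℝ)) i := fun i => by positivity
  have h1 := unif_sum hk
  refine le_trans ?_ (mse_le_Rplug hk hn (fun _ => 1 / (k : ℝ)) hP h1)
  rw [mse_eq, unif_entropy hk]
  rw [← Ex_const (fun _ : Fin k => 1 / (k : ℝ)) h1 n ((Real.log k - Real.log n) ^ 2)]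
  refine Ex_mono _ hP n _ _ fun N hN _ => ?_
  have a := plugIn_le hn N hN
  have b := Real.log_le_log hn0 hkn'
  nlinarith

theorem Rplug_var {k n : ℕ} (hk : 2 ≤ k) (hn : 1 ≤ n) :
    1 / 9 * (Real.log k ^ 2 / n) - 120 * ((k : ℝ) / n) ^ 2 ≤ Rplug k n := by
  obtain ⟨m, rfl⟩ : ∃ m, k = m + 1 := ⟨k - 1, by omega⟩
  have hm : (1 : ℝ) ≤ m := by exact_mod_cast (by omega : 1 ≤ m)
  set P : Fin (m + 1) → ℝ := Fin.cons (2 / 3) (fun _ => 1 / (3 * m)) with hPdef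
  have hP : ∀ i, 0 ≤ P i := by
    intro i
    refine Fin.cases ?_ (fun j => ?_) i
    · simp [hPdef]; norm_num
    · simp only [hPdef, Fin.cons_succ]; positivity
  have h1 : ∑ i, P i = 1 := by
    rw [Fin.sum_univ_succ]
    simp only [hPdef, Fin.cons_succ, Fin.cons_zero, Finset.sum_const, Finset.card_univ,
      Fintype.card_fin, nsmul_eq_mul]
    field_simp; norm_num
  refine le_trans ?_ (mse_le_Rplug hk hn P hP h1)
  refine le_trans ?_ (mse_lower P hP h1 n hn)
  have v : 2 / 9 * Real.log ((m + 1 : ℕ) : ℝ) ^ 2 ≤ ∑ i, P i * cl P i ^ 2 := by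
    rw [Fin.sum_univ_succ]
    simp only [cl]
    generalize entropy P = H
    simp only [hPdef, Fin.cons_succ, Fin.cons_zero, Finset.sum_const, Finset.card_univ,
      Fintype.card_fin, nsmul_eq_mul]
    have e : (m : ℝ) * (1 / (3 * m) * (Real.log (1 / (1 / (3 * m))) - H) ^ 2)
        = 1 / 3 * (Real.log (1 / (1 / (3 * m))) - H) ^ 2 := by field_simp
    rw [e]
    have d : Real.log ((m + 1 : ℕ) : ℝ)
        ≤ Real.log (1 / (1 / (3 * m))) - Real.log (1 / (2 / 3)) := by
      rw [← Real.log_div (by positivity) (by positivity)]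
      apply Real.log_le_log (by positivity)
      push_cast
      field_simp
      linarith
    have d0 : 0 ≤ Real.log ((m + 1 : ℕ) : ℝ) := Real.log_natCast_nonneg _
    generalize Real.log (1 / (1 / (3 * (m : ℝ)))) = A at *
    generalize Real.log (1 / (2 / 3) : ℝ) = B at *
    have q : Real.log ((m + 1 : ℕ) : ℝ) ^ 2 ≤ (A - B) ^ 2 := by gcongr
    nlinarith [sq_nonneg (2 * (B - H) + (A - H))]
  have w : 1 / 9 * (Real.log ((m + 1 : ℕ) : ℝ) ^ 2 / n)
      ≤ 1 / 2 * (1 / n * ∑ i, P i * cl P i ^ 2) := by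
    calc _ = 1 / 2 * (1 / n * (2 / 9 * Real.log ((m + 1 : ℕ) : ℝ) ^ 2)) := by ring
      _ ≤ _ := by gcongr
  linarith

theorem Rplug_lower {k n : ℕ} (hk : 2 ≤ k) (hn : 1 ≤ n) :
    1 / 1000000 * ((min ((k : ℝ) / n) 1) ^ 2 + (Real.log k) ^ 2 / n) ≤ Rplug k n := by
  have hn0 : (0 : ℝ) < n := by exact_mod_cast hn
  have hn1 : (1 : ℝ) ≤ n := by exact_mod_cast hn
  have hk0 : (2 : ℝ) ≤ k := by exact_mod_cast hk
  have hmin0 : 0 ≤ min ((k : ℝ) / n) 1 := by positivity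
  rcases le_total k (2 * n) with h | h
  · have a := Rplug_bias hk hn h
    have b := Rplug_var (n := n) hk hn
    have c : (min ((k : ℝ) / n) 1) ^ 2 ≤ ((k : ℝ) / n) ^ 2 := by
      gcongr; exact min_le_left _ _
    have d : 0 ≤ Real.log k ^ 2 / n := by positivity
    have e : 0 ≤ ((k : ℝ) / n) ^ 2 := by positivity
    linarith
  · have hkn : (2 : ℝ) * n ≤ k := by exact_mod_cast h
    have a := Rplug_large hk hn (by omega)
    have b : 0.69 < Real.log k - Real.log n := by
      have := Real.log_le_log (by positivity) hkn
      rw [Real.log_mul (by norm_num) hn0.ne'] at this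
      linarith [Real.log_two_gt_d9]
    have c : (min ((k : ℝ) / n) 1) ^ 2 ≤ 1 := pow_le_one₀ hmin0 (min_le_right _ _)
    have d := log_sq_le hn1
    have e : Real.log k ^ 2 / n ≤ 2 * (Real.log k - Real.log n) ^ 2 + 8 := by
      rw [div_le_iff₀ hn0]
      nlinarith [sq_nonneg (Real.log k - 2 * Real.log n),
        mul_nonneg (sq_nonneg (Real.log k - Real.log n)) (sub_nonneg.mpr hn1)]
    nlinarith

/-- non-asymptotic risk bounds for the plug-in estimator. -/
theorem plugin_risk_rate :
    ∃ C1 C2 : ℝ, 0 < C1 ∧ 0 < C2 ∧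
      ∀ k n : ℕ, 2 ≤ k → 2 ≤ n →
        C1 * ((min ((k : ℝ) / n) 1) ^ 2 + (Real.log k) ^ 2 / n) ≤ Rplug k n ∧
        Rplug k n ≤ C2 * (((k : ℝ) / n) ^ 2 + (Real.log (min (k : ℝ) n)) ^ 2 / n) := by
  exact ⟨1 / 1000000, 400, by norm_num, by norm_num, fun k n hk hn =>
    ⟨Rplug_lower hk (by omega), Rplug_upper hk (by omega)⟩⟩
end
end

section
/- Let −∞ < a < b < ∞, let g be a continuous real-valued function on [a,b], and let L ∈ ℕ. Then sup{ E[g(X)] − E[g(X')] : X, X' random variables with values in [a,b] satisfying E[X^j] = E[X'^j] for j = 1,...,L } = 2·E_L(g,[a,b]), and the supremum is attained by some pair of random variables. -/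
open scoped BigOperators
open Real MeasureTheory

noncomputable section

/-- Best uniform polynomial approximation error of `f` on `[a,b]` by polynomials of
degree at most `L`. -/
def bestApproxError (L : ℕ) (f : ℝ → ℝ) (a b : ℝ) : ℝ :=
  ⨅ p : {p : Polynomial ℝ // p.natDegree ≤ L},
    ⨆ x : Set.Icc a b, |f ↑x - Polynomial.eval (↑x : ℝ) p.1|

open scoped Pointwise

/-- The vector of moments of a probability measure on `[a,b]` along a family of functions. -/
def momVec {I : Type*} [TopologicalSpace I] [MeasurableSpace I] {n : ℕ}
    (h : Fin n → C(I, ℝ)) (g : C(I, ℝ)) (P : ProbabilityMeasure I) : (Fin n → ℝ) × ℝ :=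
  (fun i => ∫ x, h i x ∂(P : Measure I), ∫ x, g x ∂(P : Measure I))

lemma momVec_compact {I : Type*} [TopologicalSpace I] [MeasurableSpace I] [BorelSpace I]
    [CompactSpace I] [T2Space I] [CompactSpace (ProbabilityMeasure I)] {n : ℕ}
    (h : Fin n → C(I, ℝ)) (g : C(I, ℝ)) : IsCompact (Set.range (momVec h g)) := by
  apply isCompact_range
  unfold momVec
  have key : ∀ f : C(I, ℝ), Continuous fun P : ProbabilityMeasure I => ∫ x, f x ∂(P : Measure I) :=
    fun f => ProbabilityMeasure.continuous_integral_boundedContinuousFunction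
      (BoundedContinuousFunction.mkOfCompact f)
  exact (continuous_pi fun i => key (h i)).prodMk (key g)

lemma momVec_convex {I : Type*} [TopologicalSpace I] [MeasurableSpace I] [BorelSpace I]
    [CompactSpace I] {n : ℕ}
    (h : Fin n → C(I, ℝ)) (g : C(I, ℝ)) : Convex ℝ (Set.range (momVec h g)) := by
  rintro _ ⟨P, rfl⟩ _ ⟨Q, rfl⟩ s t hs ht hst
  let M : Measure I := ENNReal.ofReal s • (P : Measure I) + ENNReal.ofReal t • (Q : Measure I)
  have hM : IsProbabilityMeasure M := ⟨by
    simp only [M, Measure.add_apply, Measure.smul_apply, measure_univ, smul_eq_mul, mul_one]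
    rw [← ENNReal.ofReal_add hs ht, hst, ENNReal.ofReal_one]⟩
  have key : ∀ f : C(I, ℝ), ∫ x, f x ∂M
      = s * ∫ x, f x ∂(P : Measure I) + t * ∫ x, f x ∂(Q : Measure I) := by
    intro f
    have hi : ∀ N : ProbabilityMeasure I, Integrable (fun x => f x) (N : Measure I) := fun N =>
      BoundedContinuousFunction.integrable _ (BoundedContinuousFunction.mkOfCompact f)
    rw [integral_add_measure ((hi P).smul_measure ENNReal.ofReal_ne_top)
      ((hi Q).smul_measure ENNReal.ofReal_ne_top), integral_smul_measure, integral_smul_measure,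
      ENNReal.toReal_ofReal hs, ENNReal.toReal_ofReal ht, smul_eq_mul, smul_eq_mul]
  refine ⟨⟨M, hM⟩, ?_⟩
  ext i
  · simpa [momVec] using key (h i)
  · simpa [momVec] using key g

lemma functional_expand {n : ℕ} (f : StrongDual ℝ ((Fin n → ℝ) × ℝ)) (v : Fin n → ℝ) (t : ℝ) :
    f (v, t) = ∑ i, v i * f (Pi.single i 1, 0) + t * f (0, 1) := by
  have h1 : ((v, t) : (Fin n → ℝ) × ℝ)
      = ∑ i, v i • ((Pi.single i 1, 0) : (Fin n → ℝ) × ℝ) + t • ((0, 1) : (Fin n → ℝ) × ℝ) := by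
    ext i
    · simp [Prod.fst_sum, Finset.sum_apply, Pi.single_apply]
    · simp [Prod.snd_sum]
  conv_lhs => rw [h1]
  simp only [map_add, map_sum, map_smul, smul_eq_mul]

lemma bestApprox_le (L : ℕ) (g : ℝ → ℝ) (a b : ℝ) (hab : a < b) (p : Polynomial ℝ)
    (hp : p.natDegree ≤ L) (r : ℝ) (hr : ∀ x ∈ Set.Icc a b, |g x - p.eval x| ≤ r) :
    bestApproxError L g a b ≤ r := by
  have : Nonempty (Set.Icc a b) := ⟨⟨a, le_rfl, hab.le⟩⟩
  unfold bestApproxError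
  refine (ciInf_le ⟨0, ?_⟩ (⟨p, hp⟩ : {p : Polynomial ℝ // p.natDegree ≤ L})).trans
    (ciSup_le fun x => hr x x.2)
  rintro _ ⟨q, rfl⟩
  exact Real.iSup_nonneg fun _ => abs_nonneg _

lemma bestApprox_nonneg (L : ℕ) (g : ℝ → ℝ) (a b : ℝ) : 0 ≤ bestApproxError L g a b :=
  Real.iInf_nonneg fun _ => Real.iSup_nonneg fun _ => abs_nonneg _

lemma attained (a b : ℝ) (hab : a < b) (g : C(Set.Icc a b, ℝ)) (g' : ℝ → ℝ)
    (hgg : ∀ x : Set.Icc a b, g x = g' x) (L : ℕ) :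
    ∃ P Q : ProbabilityMeasure (Set.Icc a b),
      (∀ j ≤ L, ∫ x, (x : ℝ) ^ j ∂(P : Measure (Set.Icc a b))
        = ∫ x, (x : ℝ) ^ j ∂(Q : Measure (Set.Icc a b))) ∧
      2 * bestApproxError L g' a b = ∫ x, g x ∂(P : Measure (Set.Icc a b))
        - ∫ x, g x ∂(Q : Measure (Set.Icc a b)) := by
  let h : Fin (L + 1) → C(Set.Icc a b, ℝ) := fun j => ⟨fun x => (x : ℝ) ^ (j : ℕ), by fun_prop⟩
  set E := bestApproxError L g' a b with hE
  have hE0 : 0 ≤ E := bestApprox_nonneg _ _ _ _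
  let T := Set.range (momVec h g)
  have hTc : IsCompact T := momVec_compact h g
  have hTv : Convex ℝ T := momVec_convex h g
  by_cases hmem : ((0, 2 * E) : (Fin (L + 1) → ℝ) × ℝ) ∈ T - T
  · obtain ⟨_, ⟨P, rfl⟩, _, ⟨Q, rfl⟩, hPQ⟩ := hmem
    refine ⟨P, Q, fun j hj => ?_, ?_⟩
    · have := congrFun (congrArg Prod.fst hPQ) ⟨j, by omega⟩
      simp only [momVec, h, Prod.fst_sub, Pi.sub_apply, Pi.zero_apply, ContinuousMap.coe_mk] at this
      linarith
    · have := congrArg Prod.snd hPQ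
      simp only [momVec, Prod.snd_sub] at this
      linarith
  · exfalso
    obtain ⟨f, u, hfu, hfS⟩ := geometric_hahn_banach_closed_point (hTv.sub hTv)
      (by rw [sub_eq_add_neg]; exact (hTc.add hTc.neg).isClosed) hmem
    set s := f (0, 1) with hs
    have hu0 : 0 < u := by
      let P : ProbabilityMeasure (Set.Icc a b) :=
        ⟨Measure.dirac ⟨a, le_rfl, hab.le⟩, inferInstance⟩
      have := hfu (momVec h g P - momVec h g P) (Set.sub_mem_sub ⟨P, rfl⟩ ⟨P, rfl⟩)
      simpa using this
    have hE2 : f (0, 2 * E) = 2 * E * s := by rw [functional_expand]; simp [hs]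
    rw [hE2] at hfS
    have hspos : 0 < s := by
      by_contra hcon
      nlinarith [mul_nonneg hE0 (neg_nonneg.2 (not_lt.1 hcon))]
    let c : Fin (L + 1) → ℝ := fun i => f (Pi.single i 1, 0)
    let q : ℝ → ℝ := fun x => ∑ i : Fin (L + 1), x ^ (i : ℕ) * c i
    have hqc : Continuous q := by fun_prop
    let F : Set.Icc a b → ℝ := fun x => q x + g x * s
    have hFc : Continuous F := by fun_prop
    have hdir : ∀ x : Set.Icc a b, f (momVec h g ⟨Measure.dirac x, inferInstance⟩) = F x := by
      intro x
      unfold momVec; rw [functional_expand]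
      simp [h, F, q, c, hs]
    have hosc : ∀ x y, F x - F y < u := by
      intro x y
      have := hfu _ (Set.sub_mem_sub (Set.mem_range_self (f := momVec h g) ⟨Measure.dirac x, inferInstance⟩)
        (Set.mem_range_self (f := momVec h g) ⟨Measure.dirac y, inferInstance⟩))
      rwa [map_sub, hdir, hdir] at this
    have hne : Nonempty (Set.Icc a b) := ⟨⟨a, le_rfl, hab.le⟩⟩
    obtain ⟨xm, -, hxm⟩ := isCompact_univ.exists_isMaxOn Set.univ_nonempty hFc.continuousOn
    obtain ⟨ym, -, hym⟩ := isCompact_univ.exists_isMinOn Set.univ_nonempty hFc.continuousOn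
    let p : Polynomial ℝ := Polynomial.C ((F xm + F ym) / 2 / s)
      - ∑ i : Fin (L + 1), Polynomial.C (c i / s) * Polynomial.X ^ (i : ℕ)
    have hp : p.natDegree ≤ L := by
      refine (Polynomial.natDegree_sub_le _ _).trans (max_le (by simp) ?_)
      refine Polynomial.natDegree_sum_le_of_forall_le _ _ fun i _ => ?_
      exact (Polynomial.natDegree_C_mul_X_pow_le _ _).trans (by omega)
    have hpe : ∀ x, p.eval x = ((F xm + F ym) / 2 - q x) / s := by
      intro x
      simp only [p, q, Polynomial.eval_sub, Polynomial.eval_C, Polynomial.eval_finsetSum,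
        Polynomial.eval_mul, Polynomial.eval_pow, Polynomial.eval_X, sub_div, Finset.sum_div]
      congr 1
      exact Finset.sum_congr rfl fun i _ => by ring
    have hle : E ≤ u / 2 / s := by
      refine bestApprox_le L g' a b hab p hp _ fun x hx => ?_
      have h1 : F ⟨x, hx⟩ ≤ F xm := hxm (Set.mem_univ _)
      have h2 : F ym ≤ F ⟨x, hx⟩ := hym (Set.mem_univ _)
      have h3 := hosc xm ym
      have h4 : g' x - p.eval x = (F ⟨x, hx⟩ - (F xm + F ym) / 2) / s := by
        rw [hpe, ← hgg ⟨x, hx⟩]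
        simp only [F]
        field_simp
        ring
      rw [h4, abs_div, abs_of_pos hspos]
      gcongr
      rw [abs_le]
      constructor <;> linarith
    rw [div_div, le_div_iff₀ (by positivity)] at hle
    linarith

lemma upper (a b : ℝ) (hab : a < b) (g : ℝ → ℝ) (hg : ContinuousOn g (Set.Icc a b)) (L : ℕ)
    (μ μ' : Measure ℝ) [IsProbabilityMeasure μ] [IsProbabilityMeasure μ']
    (h1 : ∀ᵐ x ∂μ, x ∈ Set.Icc a b) (h2 : ∀ᵐ x ∂μ', x ∈ Set.Icc a b)
    (hm : ∀ j : ℕ, 1 ≤ j → j ≤ L → ∫ x, x ^ j ∂μ = ∫ x, x ^ j ∂μ') :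
    (∫ x, g x ∂μ) - ∫ x, g x ∂μ' ≤ 2 * bestApproxError L g a b := by
  have hint : ∀ (ν : Measure ℝ) [IsProbabilityMeasure ν], (∀ᵐ x ∂ν, x ∈ Set.Icc a b) →
      ∀ k : ℝ → ℝ, ContinuousOn k (Set.Icc a b) → Integrable k ν := by
    intro ν _ hν k hk
    have := hk.integrableOn_compact (μ := ν) isCompact_Icc
    rwa [IntegrableOn, Measure.restrict_eq_self_of_ae_mem hν] at this
  have : Nonempty {p : Polynomial ℝ // p.natDegree ≤ L} := ⟨⟨0, by simp⟩⟩
  suffices h : ((∫ x, g x ∂μ) - ∫ x, g x ∂μ') / 2 ≤ bestApproxError L g a b by linarith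
  refine le_ciInf ?_
  rintro ⟨p, hp⟩
  simp only
  set r := ⨆ x : Set.Icc a b, |g ↑x - Polynomial.eval (↑x : ℝ) p| with hr
  have hpc : Continuous fun x => p.eval x := p.continuous
  have hbd : ∀ x ∈ Set.Icc a b, |g x - p.eval x| ≤ r := by
    intro x hx
    refine le_ciSup (f := fun x : Set.Icc a b => |g ↑x - Polynomial.eval (↑x : ℝ) p|) ?_ ⟨x, hx⟩
    have hc : ContinuousOn (fun x => |g x - p.eval x|) (Set.Icc a b) :=
      (hg.sub hpc.continuousOn).abs
    have hb := isCompact_Icc.bddAbove_image hc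
    rwa [Set.image_eq_range] at hb
  have hpm : ∫ x, p.eval x ∂μ = ∫ x, p.eval x ∂μ' := by
    simp_rw [Polynomial.eval_eq_sum_range' (Nat.lt_succ_of_le hp)]
    rw [integral_finsetSum _ fun i _ => hint μ h1 _ (by fun_prop),
      integral_finsetSum _ fun i _ => hint μ' h2 _ (by fun_prop)]
    refine Finset.sum_congr rfl fun i hi => ?_
    rw [integral_const_mul, integral_const_mul]
    rcases Nat.eq_zero_or_pos i with rfl | hi0
    · simp
    · rw [hm i hi0 (by simpa [Nat.lt_succ_iff] using hi)]
  have hb : ∀ (ν : Measure ℝ) [IsProbabilityMeasure ν], (∀ᵐ x ∂ν, x ∈ Set.Icc a b) →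
      |(∫ x, g x ∂ν) - ∫ x, p.eval x ∂ν| ≤ r := by
    intro ν _ hν
    rw [← integral_sub (hint ν hν g hg) (hint ν hν _ hpc.continuousOn)]
    have := norm_integral_le_of_norm_le_const (μ := ν) (f := fun x => g x - p.eval x) (C := r)
      (hν.mono fun x hx => by simpa using hbd x hx)
    simpa using this
  have k1 := abs_le.1 (hb μ h1)
  have k2 := abs_le.1 (hb μ' h2)
  linarith [k1.2, k2.1]

/-- duality between moment matching and best polynomial approximation. -/
theorem moment_matching_duality
    (a b : ℝ) (hab : a < b) (g : ℝ → ℝ) (hg : ContinuousOn g (Set.Icc a b)) (L : ℕ) :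
    IsGreatest
      {d : ℝ | ∃ μ μ' : Measure ℝ,
        IsProbabilityMeasure μ ∧ IsProbabilityMeasure μ' ∧
        (∀ᵐ x ∂μ, x ∈ Set.Icc a b) ∧ (∀ᵐ x ∂μ', x ∈ Set.Icc a b) ∧
        (∀ j : ℕ, 1 ≤ j → j ≤ L → ∫ x, x ^ j ∂μ = ∫ x, x ^ j ∂μ') ∧
        d = (∫ x, g x ∂μ) - ∫ x, g x ∂μ'}
      (2 * bestApproxError L g a b) := by
  constructor
  · obtain ⟨P, Q, hm, hd⟩ := attained a b hab ⟨Set.domRestrict (Set.Icc a b) g, hg.domRestrict⟩ g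
      (fun _ => rfl) L
    have hemb : MeasurableEmbedding (Subtype.val : Set.Icc a b → ℝ) :=
      MeasurableEmbedding.subtype_coe measurableSet_Icc
    refine ⟨(P : Measure (Set.Icc a b)).map Subtype.val, (Q : Measure (Set.Icc a b)).map Subtype.val,
      Measure.isProbabilityMeasure_map (by fun_prop), Measure.isProbabilityMeasure_map (by fun_prop),
      ?_, ?_, ?_, ?_⟩
    · rw [hemb.ae_map_iff]; exact Filter.Eventually.of_forall fun x => x.2
    · rw [hemb.ae_map_iff]; exact Filter.Eventually.of_forall fun x => x.2
    · intro j _ hj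
      rw [hemb.integral_map, hemb.integral_map]
      exact hm j hj
    · rw [hemb.integral_map, hemb.integral_map]
      exact hd
  · rintro d ⟨μ, μ', i1, i2, h1, h2, hm, rfl⟩
    exact upper a b hab g hg L μ μ' h1 h2 hm
end
end

section
/- Let k ≥ 2 and n ≥ 1 be integers, let P be the uniform distribution on [k], and let Ĥ_plug(N) = Σ_{i=1}^k (N_i/n)·log(n/N_i) be the plug-in estimator computed from the histogram N of n i.i.d. samples from P. Then H(P) − E[Ĥ_plug(N)] ≥ 2·(1−1/k)^{2n} if n < k, and H(P) − E[Ĥ_plug(N)] ≥ (k/(4n))·(1−1/k) if n ≥ k. -/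
open scoped BigOperators
open Real

noncomputable section

open Finset in
lemma aux_tsum (k n : ℕ) (P : Fin k → ℝ) (f : (Fin k → ℕ) → ℝ) :
    ∑' N : Fin k → ℕ, multinomialPMF n P N * f N =
      ∑ N ∈ piAntidiag (univ : Finset (Fin k)) n,
        ((Nat.multinomial univ N : ℕ) : ℝ) * (∏ i, P i ^ (N i)) * f N := by
  rw [tsum_eq_sum (s := piAntidiag (univ : Finset (Fin k)) n)]
  · refine Finset.sum_congr rfl fun N hN => ?_
    have hs : ∑ i, N i = n := by simpa using hN
    have h := Nat.multinomial_spec (univ : Finset (Fin k)) N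
    rw [hs] at h
    have h' : (∏ i, ((N i).factorial : ℝ)) * (Nat.multinomial univ N : ℝ) = (n.factorial : ℝ) := by
      exact_mod_cast h
    have hp : (∏ i, ((N i).factorial : ℝ)) ≠ 0 :=
      Finset.prod_ne_zero_iff.2 fun i _ => by positivity
    rw [multinomialPMF, if_pos hs, ← h']
    field_simp
  · intro N hN
    have hs : ¬ ∑ i, N i = n := by simpa using hN
    rw [multinomialPMF, if_neg hs, zero_mul]

/-- weight of a histogram under the uniform distribution -/
def wt (k : ℕ) (N : Fin k → ℕ) : ℝ :=
  ((Nat.multinomial Finset.univ N : ℕ) : ℝ) * (∏ i, (1 / (k : ℝ)) ^ (N i))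

lemma wt_nonneg (k : ℕ) (N : Fin k → ℕ) : 0 ≤ wt k N := by
  unfold wt
  exact mul_nonneg (by positivity) (Finset.prod_nonneg fun i _ => by positivity)

open Finset Polynomial in
lemma gen (k n : ℕ) (hk : 2 ≤ k) (i : Fin k) :
    ∑ N ∈ piAntidiag (univ : Finset (Fin k)) n, C (wt k N) * (X : ℝ[X]) ^ (N i) =
      (C (1 - 1 / (k : ℝ)) + C (1 / (k : ℝ)) * X) ^ n := by
  have hk0 : (k : ℝ) ≠ 0 := by positivity
  have h := Finset.sum_pow_eq_sum_piAntidiag (univ : Finset (Fin k))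
    (fun j => C (1 / (k : ℝ)) * (if j = i then (X : ℝ[X]) else 1)) n
  have h1 : ∑ j : Fin k, C (1 / (k : ℝ)) * (if j = i then (X : ℝ[X]) else 1) =
      C (1 - 1 / (k : ℝ)) + C (1 / (k : ℝ)) * X := by
    have e : ∀ j : Fin k, C (1 / (k : ℝ)) * (if j = i then (X : ℝ[X]) else 1) =
        C (1 / (k : ℝ)) + (if j = i then C (1 / (k : ℝ)) * (X - 1) else 0) := by
      intro j; split_ifs <;> ring
    rw [Finset.sum_congr rfl fun j _ => e j, Finset.sum_add_distrib, Finset.sum_ite_eq' univ i]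
    simp only [Finset.sum_const, Finset.card_univ, Fintype.card_fin, Finset.mem_univ, if_true]
    have : k • C (1 / (k : ℝ)) = (1 : ℝ[X]) := by
      rw [← Polynomial.C_1, ← map_nsmul]; congr 1; simp [hk0]
    rw [this, C_sub, C_1]; ring
  rw [h1] at h
  rw [h]
  refine Finset.sum_congr rfl fun N _ => ?_
  have h2 : ∏ j, (C (1 / (k : ℝ)) * (if j = i then (X : ℝ[X]) else 1)) ^ (N j) =
      C (∏ j, (1 / (k : ℝ)) ^ (N j)) * X ^ (N i) := by
    simp only [mul_pow, Finset.prod_mul_distrib, ite_pow, one_pow]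
    rw [Finset.prod_ite_eq' univ i]
    simp only [Finset.mem_univ, if_true, map_prod, map_pow]
  rw [h2, wt, C_mul]
  simp only [map_natCast]
  ring

/-- expectation of a function of the `i`-th count -/
def ex (k n : ℕ) (i : Fin k) (f : ℕ → ℝ) : ℝ :=
  ∑ N ∈ Finset.piAntidiag (Finset.univ : Finset (Fin k)) n, wt k N * f (N i)

lemma ex_mono (k n : ℕ) (i : Fin k) (f g : ℕ → ℝ) (h : ∀ m, f m ≤ g m) :
    ex k n i f ≤ ex k n i g :=
  Finset.sum_le_sum fun N _ => mul_le_mul_of_nonneg_left (h _) (wt_nonneg k N)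

lemma ex_add (k n : ℕ) (i : Fin k) (f g : ℕ → ℝ) :
    ex k n i (fun m => f m + g m) = ex k n i f + ex k n i g := by
  simp only [ex, mul_add, Finset.sum_add_distrib]

lemma ex_smul (k n : ℕ) (i : Fin k) (c : ℝ) (g : ℕ → ℝ) :
    ex k n i (fun m => c * g m) = c * ex k n i g := by
  simp only [ex, Finset.mul_sum]
  exact Finset.sum_congr rfl fun N _ => by ring

section
open Polynomial

lemma ex_zero (k n : ℕ) (hk : 2 ≤ k) (i : Fin k) :
    ex k n i (fun m => (0 : ℝ) ^ m) = (1 - 1 / (k : ℝ)) ^ n := by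
  have h := congrArg (Polynomial.eval 0) (gen k n hk i)
  rw [Polynomial.eval_finsetSum] at h
  simpa [ex] using h

lemma ex_one (k n : ℕ) (hk : 2 ≤ k) (i : Fin k) :
    ex k n i (fun _ => 1) = 1 := by
  have h := congrArg (Polynomial.eval 1) (gen k n hk i)
  rw [Polynomial.eval_finsetSum] at h
  simpa [ex] using h

lemma ex_fac1 (k n : ℕ) (hk : 2 ≤ k) (i : Fin k) :
    ex k n i (fun m => m) = n * (1 / (k : ℝ)) := by
  have h := congrArg (fun p => Polynomial.eval 1 (derivative p)) (gen k n hk i)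
  simp only [derivative_sum, Polynomial.eval_finsetSum] at h
  simpa [ex, derivative_pow] using h

lemma cast_fac2 (m : ℕ) : (m : ℝ) * ((m - 1 : ℕ) : ℝ) = m * (m - 1) := by
  rcases m with _ | m <;> simp

lemma cast_fac3 (m : ℕ) : (m : ℝ) * (((m - 1 : ℕ) : ℝ) * ((m - 1 - 1 : ℕ) : ℝ)) =
    m * ((m - 1) * (m - 2)) := by
  rcases m with _ | _ | m
  · simp
  · simp
  · simp; ring_nf; simp

lemma ex_fac2 (k n : ℕ) (hk : 2 ≤ k) (i : Fin k) :
    ex k n i (fun m => m * (m - 1)) = n * (n - 1) * (1 / (k : ℝ)) ^ 2 := by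
  have h := congrArg (fun p => Polynomial.eval 1 (derivative (derivative p))) (gen k n hk i)
  simp only [derivative_sum, Polynomial.eval_finsetSum] at h
  have h2 : ∑ N ∈ Finset.piAntidiag (Finset.univ : Finset (Fin k)) n,
      wt k N * ((N i : ℝ) * ((N i - 1 : ℕ) : ℝ)) =
      ((n : ℝ) * ((n - 1 : ℕ) : ℝ)) * (1 / (k : ℝ)) ^ 2 := by
    simp [derivative_pow] at h
    simp
    rw [h]; ring
  simp only [cast_fac2] at h2
  exact h2

lemma ex_fac3 (k n : ℕ) (hk : 2 ≤ k) (i : Fin k) :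
    ex k n i (fun m => m * ((m - 1) * (m - 2))) =
      n * ((n - 1) * (n - 2)) * (1 / (k : ℝ)) ^ 3 := by
  have h := congrArg (fun p => Polynomial.eval 1 (derivative (derivative (derivative p))))
    (gen k n hk i)
  simp only [derivative_sum, Polynomial.eval_finsetSum] at h
  have h2 : ∑ N ∈ Finset.piAntidiag (Finset.univ : Finset (Fin k)) n,
      wt k N * ((N i : ℝ) * (((N i - 1 : ℕ) : ℝ) * ((N i - 1 - 1 : ℕ) : ℝ))) =
      ((n : ℝ) * (((n - 1 : ℕ) : ℝ) * ((n - 1 - 1 : ℕ) : ℝ))) * (1 / (k : ℝ)) ^ 3 := by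
    simp [derivative_pow] at h
    simp
    rw [h]; ring
  simp only [cast_fac3] at h2
  exact h2

end

lemma phi_nonneg (x : ℝ) (hx : 0 < x) :
    0 ≤ Real.log x + x ^ 2 / 6 - x + 1 / 2 + 1 / 3 * x⁻¹ := by
  set φ : ℝ → ℝ := fun x => Real.log x + x ^ 2 / 6 - x + 1 / 2 + 1 / 3 * x⁻¹ with hφ
  have hd : ∀ y : ℝ, 0 < y → HasDerivAt φ ((y - 1) ^ 3 / (3 * y ^ 2)) y := by
    intro y hy
    have h := ((((Real.hasDerivAt_log hy.ne').add ((hasDerivAt_pow 2 y).div_const 6)).sub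
      (hasDerivAt_id y)).add_const (1 / 2)).add ((hasDerivAt_inv hy.ne').const_mul (1 / 3))
    refine h.congr_deriv ?_
    field_simp
    norm_num
    ring
  have h1 : φ 1 = 0 := by simp [hφ]; norm_num
  change 0 ≤ φ x
  rw [← h1]
  rcases le_total x 1 with h | h
  · have : AntitoneOn φ (Set.Icc x 1) := by
      apply antitoneOn_of_deriv_nonpos (convex_Icc x 1)
      · exact fun y hy => (hd y (hx.trans_le hy.1)).continuousAt.continuousWithinAt
      · intro y hy
        rw [interior_Icc] at hy
        exact (hd y (hx.trans hy.1)).differentiableAt.differentiableWithinAt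
      · intro y hy
        rw [interior_Icc] at hy
        rw [(hd y (hx.trans hy.1)).deriv]
        apply div_nonpos_of_nonpos_of_nonneg _ (by positivity)
        have := hy.2
        exact (Odd.pow_nonpos_iff (by decide)).2 (by linarith)
    exact this ⟨le_rfl, h⟩ ⟨h, le_rfl⟩ h
  · have : MonotoneOn φ (Set.Icc 1 x) := by
      apply monotoneOn_of_deriv_nonneg (convex_Icc 1 x)
      · exact fun y hy => (hd y (one_pos.trans_le hy.1)).continuousAt.continuousWithinAt
      · intro y hy
        rw [interior_Icc] at hy
        exact (hd y (one_pos.trans hy.1)).differentiableAt.differentiableWithinAt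
      · intro y hy
        rw [interior_Icc] at hy
        rw [(hd y (one_pos.trans hy.1)).deriv]
        have := hy.1
        have : 0 ≤ y - 1 := by linarith
        positivity
    exact this ⟨le_rfl, h⟩ ⟨h, le_rfl⟩ h

lemma xlogx_cubic (x : ℝ) (hx : 0 < x) :
    (x - 1) + (x - 1) ^ 2 / 2 - (x - 1) ^ 3 / 6 ≤ x * Real.log x := by
  have h := mul_nonneg hx.le (phi_nonneg x hx)
  have e : x * x⁻¹ = 1 := mul_inv_cancel₀ hx.ne'
  nlinarith

lemma neg_log_bound (u : ℝ) (h0 : 0 ≤ u) (h1 : u < 1) : 2 * u ^ 2 ≤ - Real.log (1 - u) := by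
  set φ : ℝ → ℝ := fun u => - Real.log (1 - u) - 2 * u ^ 2 with hφ
  have hd : ∀ y : ℝ, y < 1 → HasDerivAt φ ((1 - 2 * y) ^ 2 / (1 - y)) y := by
    intro y hy
    have hy' : 1 - y ≠ 0 := by linarith
    have h := ((((hasDerivAt_id y).const_sub 1).log hy').neg).sub
      ((hasDerivAt_pow 2 y).const_mul 2)
    refine h.congr_deriv ?_
    simp only [id]
    field_simp
    norm_num
    ring
  have : MonotoneOn φ (Set.Icc 0 u) := by
    apply monotoneOn_of_deriv_nonneg (convex_Icc 0 u)
    · exact fun y hy => (hd y (hy.2.trans_lt h1)).continuousAt.continuousWithinAt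
    · intro y hy
      rw [interior_Icc] at hy
      exact (hd y (hy.2.trans h1)).differentiableAt.differentiableWithinAt
    · intro y hy
      rw [interior_Icc] at hy
      have hy1 := hy.2.trans h1
      rw [(hd y hy1).deriv]
      exact div_nonneg (sq_nonneg _) (by linarith)
  have h := this ⟨le_rfl, h0⟩ ⟨h0, le_rfl⟩ h0
  simp [hφ] at h
  linarith

/-- summand of the plug-in estimator in terms of `x = k m / n` -/
lemma summand (k n m : ℕ) (hk : 2 ≤ k) (hn : 1 ≤ n) (hm : 1 ≤ m) :
    ((m : ℝ) / n) * Real.log ((n : ℝ) / m) =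
      1 / k * ((k * m / n : ℝ) * Real.log k - (k * m / n : ℝ) * Real.log (k * m / n : ℝ)) := by
  have hk0 : (k : ℝ) ≠ 0 := by positivity
  have hn0 : (n : ℝ) ≠ 0 := by positivity
  have hm0 : (m : ℝ) ≠ 0 := by positivity
  rw [Real.log_div hn0 hm0, Real.log_div (by positivity) hn0, Real.log_mul hk0 hm0]
  field_simp
  ring

lemma reduce (k n : ℕ) (hk : 2 ≤ k) (B : ℝ)
    (h : ∀ i : Fin k, ex k n i (fun m => ((m : ℝ) / n) * Real.log ((n : ℝ) / m)) ≤
      1 / k * (Real.log k - B)) :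
    B ≤ entropy (fun _ : Fin k => 1 / (k : ℝ)) -
          ∑' N : Fin k → ℕ,
            multinomialPMF n (fun _ : Fin k => 1 / (k : ℝ)) N * plugIn n N := by
  have hk0 : (k : ℝ) ≠ 0 := by positivity
  rw [aux_tsum]
  have e : ∑ N ∈ Finset.piAntidiag (Finset.univ : Finset (Fin k)) n,
        ((Nat.multinomial Finset.univ N : ℕ) : ℝ) * (∏ i, (1 / (k : ℝ)) ^ (N i)) * plugIn n N
      = ∑ i : Fin k, ex k n i (fun m => ((m : ℝ) / n) * Real.log ((n : ℝ) / m)) := by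
    simp only [ex, plugIn, Finset.mul_sum, wt]
    rw [Finset.sum_comm]
  rw [e]
  have h2 := Finset.sum_le_sum fun i (_ : i ∈ Finset.univ) => h i
  have h3 : ∑ i : Fin k, 1 / (k : ℝ) * (Real.log k - B) = Real.log k - B := by
    simp; field_simp
  have h4 : entropy (fun _ : Fin k => 1 / (k : ℝ)) = Real.log k := by
    simp [entropy]; field_simp
  rw [h4]
  linarith

lemma case1 (k n : ℕ) (hk : 2 ≤ k) (hn : 1 ≤ n) (i : Fin k) :
    ex k n i (fun m => ((m : ℝ) / n) * Real.log ((n : ℝ) / m)) ≤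
      1 / k * (Real.log k - 2 * (1 - 1 / (k : ℝ)) ^ (2 * n)) := by
  have hk0 : (0 : ℝ) < k := by positivity
  have hn0 : (0 : ℝ) < n := by positivity
  have hk2 : (2 : ℝ) ≤ k := by exact_mod_cast hk
  have hp : 1 / (k : ℝ) ≤ 1 / 2 := one_div_le_one_div_of_le (by norm_num) hk2
  have hp0 : 0 < 1 / (k : ℝ) := by positivity
  set u : ℝ := (1 - 1 / (k : ℝ)) ^ n with hu
  have hu0 : 0 ≤ u := pow_nonneg (by linarith) _
  have hu1 : u < 1 := pow_lt_one₀ (by linarith) (by linarith) (by omega)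
  set c : ℝ := 1 - u with hc
  have hc0 : 0 < c := by linarith
  have hpt : ∀ m : ℕ, ((m : ℝ) / n) * Real.log ((n : ℝ) / m) ≤
      (1 / n * (Real.log k - 1 + Real.log c)) * m + (1 / k * (1 / c)) * 1
        + (-(1 / k * (1 / c))) * (0 : ℝ) ^ m := by
    intro m
    rcases Nat.eq_zero_or_pos m with rfl | hm
    · simp
    · rw [summand k n m hk hn hm, zero_pow (by omega)]
      have hm0 : (0 : ℝ) < m := by exact_mod_cast hm
      set x : ℝ := k * m / n with hx
      have hx0 : 0 < x := by positivity
      have hl := Real.log_le_sub_one_of_pos (show 0 < (c * x)⁻¹ by positivity)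
      rw [Real.log_inv, Real.log_mul hc0.ne' hx0.ne'] at hl
      have h5 := mul_le_mul_of_nonneg_left hl hx0.le
      have h6 : x * (c * x)⁻¹ = 1 / c := by field_simp
      have h7 : (1 / n * (Real.log k - 1 + Real.log c)) * m =
          1 / k * (x * (Real.log k - 1 + Real.log c)) := by rw [hx]; field_simp
      rw [h7, mul_one, mul_zero, add_zero, ← mul_add]
      apply mul_le_mul_of_nonneg_left _ hp0.le
      rw [mul_sub, h6] at h5
      linarith
  have h := ex_mono k n i _ _ hpt
  rw [ex_add, ex_add, ex_smul, ex_smul, ex_smul, ex_zero k n hk, ex_one k n hk,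
    ex_fac1 k n hk, ← hu] at h
  refine h.trans ?_
  have hb := neg_log_bound u hu0 hu1
  rw [← hc] at hb
  have e1 : 1 / ↑n * (Real.log ↑k - 1 + Real.log c) * (↑n * (1 / ↑k)) + 1 / ↑k * (1 / c) * 1
      + -(1 / ↑k * (1 / c)) * u = 1 / (k : ℝ) * (Real.log k + Real.log c) := by
    have : u = 1 - c := by rw [hc]; ring
    rw [this]; field_simp; ring
  rw [e1]
  apply mul_le_mul_of_nonneg_left _ hp0.le
  have : (1 - 1 / (k : ℝ)) ^ (2 * n) = u ^ 2 := by rw [hu, ← pow_mul, mul_comm]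
  rw [this]; linarith

lemma case2 (k n : ℕ) (hk : 2 ≤ k) (hn : 1 ≤ n) (hkn : k ≤ n) (i : Fin k) :
    ex k n i (fun m => ((m : ℝ) / n) * Real.log ((n : ℝ) / m)) ≤
      1 / k * (Real.log k - (k : ℝ) / (4 * n) * (1 - 1 / (k : ℝ))) := by
  have hk0 : (0 : ℝ) < k := by positivity
  have hn0 : (0 : ℝ) < n := by positivity
  have hk2 : (2 : ℝ) ≤ k := by exact_mod_cast hk
  have hkn' : (k : ℝ) ≤ n := by exact_mod_cast hkn
  have hp0 : 0 < 1 / (k : ℝ) := by positivity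
  set r : ℝ := k / n with hr
  -- cubic in `x = r m`, rewritten in the falling factorial basis
  have hpt : ∀ m : ℕ, ((m : ℝ) / n) * Real.log ((n : ℝ) / m) ≤
      1 / k * ((r * Real.log k + r / 2 - r ^ 2 + r ^ 3 / 6) * m + 1 / 3 * 1
        + (- r ^ 2 + r ^ 3 / 2) * (m * (m - 1)) + (r ^ 3 / 6) * (m * ((m - 1) * (m - 2)))) := by
    intro m
    rcases Nat.eq_zero_or_pos m with rfl | hm
    · simp
    · rw [summand k n m hk hn hm]
      have hm0 : (0 : ℝ) < m := by exact_mod_cast hm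
      apply mul_le_mul_of_nonneg_left _ hp0.le
      have hx : (k * m / n : ℝ) = r * m := by rw [hr]; ring
      rw [hx]
      have hr0 : 0 < r := by positivity
      have h := xlogx_cubic (r * m) (by positivity)
      nlinarith
  have h := ex_mono k n i _ _ hpt
  rw [ex_smul, ex_add, ex_add, ex_add, ex_smul, ex_smul, ex_smul, ex_smul, ex_one k n hk,
    ex_fac1 k n hk, ex_fac2 k n hk, ex_fac3 k n hk] at h
  refine h.trans ?_
  apply mul_le_mul_of_nonneg_left _ hp0.le
  have key : Real.log k - r / 4 * (1 - 1 / (k : ℝ)) -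
     ((r * Real.log k + r / 2 - r ^ 2 + r ^ 3 / 6) * (n * (1 / k)) + 1 / 3 * 1
        + (- r ^ 2 + r ^ 3 / 2) * (n * (n - 1) * (1 / (k : ℝ)) ^ 2)
        + (r ^ 3 / 6) * (n * ((n - 1) * (n - 2)) * (1 / (k : ℝ)) ^ 3))
      = (k - 1) * ((n - k) * 3 + k  + 4) / (12 * n ^ 2) := by
    rw [hr]; field_simp; ring
  have hpos : 0 ≤ ((k : ℝ) - 1) * ((n - k) * 3 + k  + 4) / (12 * n ^ 2) := by
    apply div_nonneg _ (by positivity)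
    apply mul_nonneg <;> nlinarith
  have : (k : ℝ) / (4 * n) = r / 4 := by rw [hr]; field_simp
  rw [this]
  linarith

/-- lower bound on the bias of the plug-in estimator under the uniform
distribution. -/
theorem plugin_bias_uniform (k n : ℕ) (hk : 2 ≤ k) (hn : 1 ≤ n) :
    (n < k →
      2 * (1 - 1 / (k : ℝ)) ^ (2 * n) ≤
        entropy (fun _ : Fin k => 1 / (k : ℝ)) -
          ∑' N : Fin k → ℕ,
            multinomialPMF n (fun _ : Fin k => 1 / (k : ℝ)) N * plugIn n N) ∧
    (k ≤ n →
      (k : ℝ) / (4 * n) * (1 - 1 / (k : ℝ)) ≤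
        entropy (fun _ : Fin k => 1 / (k : ℝ)) -
          ∑' N : Fin k → ℕ,
            multinomialPMF n (fun _ : Fin k => 1 / (k : ℝ)) N * plugIn n N) := by
  exact ⟨fun _ => reduce k n hk _ (case1 k n hk hn), fun h => reduce k n hk _ (case2 k n hk hn h)⟩
end
end
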